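/- Fix d ≥ 1 and 0 ≤ r ≤ d−1. Then P_r(ℚ)Q_r(𝔸_f) ∩ GSp_{2d}(Ẑ) = P_r(ℤ)·Q_r(Ẑ), where P_r(ℤ) = P_r(ℚ) ∩ GL_{2d}(ℤ) and Q_r(Ẑ) = Q_r(𝔸_f) ∩ GSp_{2d}(Ẑ): an element k ∈ GSp_{2d}(Ẑ) lies in P_r(ℚ)Q_r(𝔸_f) if and only if k can be written k = p·q with p ∈ P_r(ℤ) and q ∈ Q_r(Ẑ). -/

import Mathlib

open Matrix
open scoped TensorProduct

noncomputable section

/-- The profinite completion `Ẑ` of `ℤ`, as the inverse limit of the rings `ℤ/nℤ`. -/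
def ZHat : Subring (∀ n : ℕ+, ZMod (n : ℕ)) where
  carrier := {x | ∀ (m k : ℕ+) (h : (m : ℕ) ∣ (k : ℕ)), ZMod.castHom h (ZMod (m : ℕ)) (x k) = x m}
  zero_mem' := by intro m k h; simp only [Pi.zero_apply, _root_.map_zero]
  one_mem' := by intro m k h; simp only [Pi.one_apply, _root_.map_one]
  add_mem' := by intro a b ha hb m k h; simp only [Pi.add_apply, _root_.map_add, ha m k h, hb m k h]
  mul_mem' := by intro a b ha hb m k h; simp only [Pi.mul_apply, _root_.map_mul, ha m k h, hb m k h]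
  neg_mem' := by intro a ha m k h; simp only [Pi.neg_apply, _root_.map_neg, ha m k h]

/-- Reduction modulo `n`, as a ring homomorphism `Ẑ → ℤ/nℤ`. -/
def projZHat (n : ℕ+) : ↥ZHat →+* ZMod (n : ℕ) :=
  (Pi.evalRingHom (fun k : ℕ+ => ZMod (k : ℕ)) n).comp ZHat.subtype

/-- The ring of finite adeles of `ℚ`, presented as `Ẑ ⊗_ℤ ℚ`. -/
abbrev AQf : Type := ↥ZHat ⊗[ℤ] ℚ

/-- The inclusion `Ẑ → 𝔸_f`. -/
def zhatToA : ↥ZHat →+* AQf := Algebra.TensorProduct.includeLeftRingHom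

/-- The diagonal inclusion `ℚ → 𝔸_f`. -/
def ratToA : ℚ →+* AQf := (Algebra.TensorProduct.includeRight).toRingHom

/-- Functoriality of `GL_m` in the ring. -/
def glMap {m : ℕ} {R S : Type*} [CommRing R] [CommRing S] (f : R →+* S) :
    GL (Fin m) R →* GL (Fin m) S :=
  Units.map (f.mapMatrix : Matrix (Fin m) (Fin m) R →+* Matrix (Fin m) (Fin m) S).toMonoidHom

/-- The `d × d` antidiagonal matrix `J_d`. -/
def Jmat (d : ℕ) (R : Type*) [CommRing R] : Matrix (Fin d) (Fin d) R :=
  Matrix.of fun i j => if (i : ℕ) + (j : ℕ) + 1 = d then 1 else 0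

/-- The standard symplectic similitude form `J_{d,d} = [[0, J_d], [-J_d, 0]]`. -/
def Jsymp (d : ℕ) (R : Type*) [CommRing R] : Matrix (Fin (2 * d)) (Fin (2 * d)) R :=
  Matrix.of fun i j =>
    if (i : ℕ) + (j : ℕ) + 1 = 2 * d then (if (i : ℕ) < d then 1 else -1) else 0

private lemma conj_aux {n : ℕ} {R : Type*} [CommRing R]
    (A B J : Matrix (Fin n) (Fin n) R) :
    Bᵀ * (Aᵀ * J * A) * B = (A * B)ᵀ * J * (A * B) := by
  simp only [Matrix.transpose_mul, Matrix.mul_assoc]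

/-- The symplectic similitude group `GSp_{2d}(R)`, with the similitude factor recorded:
pairs `(g, c)` with `ᵗg · J_{d,d} · g = c · J_{d,d}`.  For `d ≥ 1` the similitude `c` is
uniquely determined by `g`. -/
def GSpP (d : ℕ) (R : Type*) [CommRing R] : Subgroup (GL (Fin (2 * d)) R × Rˣ) where
  carrier := {x | ((x.1 : Matrix (Fin (2 * d)) (Fin (2 * d)) R))ᵀ * Jsymp d R *
      (x.1 : Matrix (Fin (2 * d)) (Fin (2 * d)) R) = ((x.2 : Rˣ) : R) • Jsymp d R}
  one_mem' := by
    simp only [Set.mem_setOf_eq, Prod.fst_one, Prod.snd_one, Units.val_one, one_smul]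
    simp
  mul_mem' := by
    intro a b ha hb
    simp only [Set.mem_setOf_eq] at ha hb ⊢
    have h1 : ((a * b).1 : Matrix (Fin (2 * d)) (Fin (2 * d)) R)
        = (a.1 : Matrix (Fin (2 * d)) (Fin (2 * d)) R) *
          (b.1 : Matrix (Fin (2 * d)) (Fin (2 * d)) R) := rfl
    have h2 : (((a * b).2 : Rˣ) : R) = ((a.2 : Rˣ) : R) * ((b.2 : Rˣ) : R) := rfl
    rw [h1, h2, ← conj_aux, ha, Matrix.mul_smul, Matrix.smul_mul, hb, smul_smul]
  inv_mem' := by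
    intro a ha
    simp only [Set.mem_setOf_eq] at ha ⊢
    have h1 : ((a⁻¹).1 : Matrix (Fin (2 * d)) (Fin (2 * d)) R)
        = (((a.1)⁻¹ : GL (Fin (2 * d)) R) : Matrix (Fin (2 * d)) (Fin (2 * d)) R) := rfl
    have h2 : (((a⁻¹).2 : Rˣ) : R) = (((a.2)⁻¹ : Rˣ) : R) := rfl
    have hJ : Jsymp d R = (((a.2)⁻¹ : Rˣ) : R) •
        ((a.1 : Matrix (Fin (2 * d)) (Fin (2 * d)) R)ᵀ * Jsymp d R *
          (a.1 : Matrix (Fin (2 * d)) (Fin (2 * d)) R)) := by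
      rw [ha, smul_smul, ← Units.val_mul, inv_mul_cancel, Units.val_one, one_smul]
    rw [h1, h2]
    conv_lhs => rw [hJ]
    rw [Matrix.mul_smul, Matrix.smul_mul, conj_aux, Units.mul_inv]
    simp

/-- The symplectic similitude group `GSp_{2d}(R)` as a matrix group. -/
def GSp (d : ℕ) (R : Type*) [CommRing R] : Subgroup (GL (Fin (2 * d)) R) :=
  (GSpP d R).map (MonoidHom.fst _ _)

/-- Index of the block (of sizes `d-r`, `2r`, `d-r`) that the `i`-th coordinate belongs to. -/
def blk (d r : ℕ) (i : ℕ) : ℕ := if i < d - r then 0 else if i < d + r then 1 else 2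

/-- The standard maximal parabolic subgroup `P_r` of `GSp_{2d}`:
elements of `GSp_{2d}` that are block upper triangular for the partition `(d-r, 2r, d-r)`. -/
def PrSet (d r : ℕ) (R : Type*) [CommRing R] : Set (GL (Fin (2 * d)) R) :=
  {g | g ∈ GSp d R ∧
    ∀ i j : Fin (2 * d), blk d r (j : ℕ) < blk d r (i : ℕ) →
      (g : Matrix (Fin (2 * d)) (Fin (2 * d)) R) i j = 0}

/-- The unipotent radical `N_r` of `P_r`: block upper triangular elements of `GSp_{2d}`
whose diagonal blocks are identity matrices. -/
def NrSet (d r : ℕ) (R : Type*) [CommRing R] : Set (GL (Fin (2 * d)) R) :=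
  {g | g ∈ GSp d R ∧
    (∀ i j : Fin (2 * d), blk d r (j : ℕ) < blk d r (i : ℕ) →
      (g : Matrix (Fin (2 * d)) (Fin (2 * d)) R) i j = 0) ∧
    (∀ i j : Fin (2 * d), blk d r (i : ℕ) = blk d r (j : ℕ) →
      (g : Matrix (Fin (2 * d)) (Fin (2 * d)) R) i j = if i = j then 1 else 0)}

/-- The subgroup `Q_r` of `P_r`: block upper triangular elements of `GSp_{2d}` with
last diagonal block the identity and first diagonal block the similitude times the identity. -/
def QrSet (d r : ℕ) (R : Type*) [CommRing R] : Set (GL (Fin (2 * d)) R) :=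
  {g | ∃ c : Rˣ,
    (g : Matrix (Fin (2 * d)) (Fin (2 * d)) R)ᵀ * Jsymp d R *
      (g : Matrix (Fin (2 * d)) (Fin (2 * d)) R) = (c : R) • Jsymp d R ∧
    (∀ i j : Fin (2 * d), blk d r (j : ℕ) < blk d r (i : ℕ) →
      (g : Matrix (Fin (2 * d)) (Fin (2 * d)) R) i j = 0) ∧
    (∀ i j : Fin (2 * d), blk d r (i : ℕ) = 0 → blk d r (j : ℕ) = 0 →
      (g : Matrix (Fin (2 * d)) (Fin (2 * d)) R) i j = if i = j then (c : R) else 0) ∧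
    (∀ i j : Fin (2 * d), blk d r (i : ℕ) = 2 → blk d r (j : ℕ) = 2 →
      (g : Matrix (Fin (2 * d)) (Fin (2 * d)) R) i j = if i = j then 1 else 0)}

/-- The linear part `L_{ℓ,r}` of the Levi quotient of `P_r`: block diagonal symplectic
(similitude `1`) matrices with middle block the identity. -/
def LlrSet (d r : ℕ) (R : Type*) [CommRing R] : Set (GL (Fin (2 * d)) R) :=
  {g | (g : Matrix (Fin (2 * d)) (Fin (2 * d)) R)ᵀ * Jsymp d R *
      (g : Matrix (Fin (2 * d)) (Fin (2 * d)) R) = Jsymp d R ∧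
    (∀ i j : Fin (2 * d), blk d r (i : ℕ) ≠ blk d r (j : ℕ) →
      (g : Matrix (Fin (2 * d)) (Fin (2 * d)) R) i j = 0) ∧
    (∀ i j : Fin (2 * d), blk d r (i : ℕ) = 1 → blk d r (j : ℕ) = 1 →
      (g : Matrix (Fin (2 * d)) (Fin (2 * d)) R) i j = if i = j then 1 else 0)}

/-- `P_r(ℚ)`, viewed inside `GL_{2d}(𝔸_f)`. -/
def PrQinA (d r : ℕ) : Set (GL (Fin (2 * d)) AQf) := (glMap ratToA) '' (PrSet d r ℚ)

/-- `L_{ℓ,r}(ℚ)`, viewed inside `GL_{2d}(𝔸_f)`. -/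
def LlrQinA (d r : ℕ) : Set (GL (Fin (2 * d)) AQf) := (glMap ratToA) '' (LlrSet d r ℚ)

/-- `GSp_{2d}(Ẑ)`, viewed inside `GL_{2d}(𝔸_f)`. -/
def GSpZinA (d : ℕ) : Subgroup (GL (Fin (2 * d)) AQf) := (GSp d ↥ZHat).map (glMap zhatToA)

/-- The principal congruence subgroup `K_d(n) = Ker(GSp_{2d}(Ẑ) → GSp_{2d}(ℤ/nℤ))`. -/
def KdZ (d : ℕ) (n : ℕ+) : Subgroup (GL (Fin (2 * d)) ↥ZHat) :=
  GSp d ↥ZHat ⊓ (glMap (projZHat n)).ker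

/-- The principal congruence subgroup `K_d(n)`, viewed inside `GL_{2d}(𝔸_f)`. -/
def KdA (d : ℕ) (n : ℕ+) : Subgroup (GL (Fin (2 * d)) AQf) := (KdZ d n).map (glMap zhatToA)

/-!
Let `E₂` be the projection onto the last block of coordinates. For elements of `GSp`, being in
`Q_r` means `E₂ * q = E₂`, and elements of `P_r` satisfy `E₂ * p = E₂ * p * E₂`. Hence if
`k = p * q` then the last block rows of `k` and `p`, and of `k⁻¹` and `p⁻¹`, agree; their entries
are both rational and integral adeles, so they are integers. The last diagonal block `C` of `p` is
thus invertible over `ℤ`, and the Levi element `p₀ = diag((C†)⁻¹, 1, C)` lies in `P_r(ℤ)`, where `†`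
is the adjoint for the symplectic form. Finally `E₂ * p₀⁻¹ * p = E₂`, so `p₀⁻¹ * k` is in `Q_r`.
-/

section SympAdjoint

variable {d : ℕ} {R S : Type*} [CommRing R] [CommRing S]

lemma Jsymp_apply (i j : Fin (2 * d)) :
    Jsymp d R i j = if j = i.rev then (if (i : ℕ) < d then 1 else -1) else 0 := by
  have h_antidiagonal : ((i : ℕ) + (j : ℕ) + 1 = 2 * d) ↔ j = i.rev := by
    rw [Fin.ext_iff, Fin.val_rev]
    lia
  simp only [Jsymp, Matrix.of_apply, h_antidiagonal]

lemma Jsymp_transpose : (Jsymp d R)ᵀ = -Jsymp d R := by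
  ext i j
  simp only [Jsymp, Matrix.transpose_apply, Matrix.neg_apply, Matrix.of_apply]
  split_ifs <;> first | lia | simp

lemma Jsymp_mul_self : Jsymp d R * Jsymp d R = -1 := by
  ext i j
  simp only [Matrix.mul_apply, Jsymp_apply, ite_mul, zero_mul, Finset.sum_ite_eq',
    Finset.mem_univ, if_true, Fin.rev_rev, Matrix.neg_apply, Matrix.one_apply, eq_comm (a := j),
    Fin.val_rev]
  split_ifs <;> first | lia | simp

lemma mapMatrix_Jsymp (f : R →+* S) : f.mapMatrix (Jsymp d R) = Jsymp d S := by
  ext i j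
  simp only [RingHom.mapMatrix_apply, Matrix.map_apply, Jsymp_apply, apply_ite f, map_one,
    map_neg, map_zero]

/-- The adjoint `M†` of a matrix for the symplectic form `J_{d,d}`, characterized by
`ᵗM * J = J * M†`. The sign is there because `J⁻¹ = -J`. -/
def sympAdjoint (M : Matrix (Fin (2 * d)) (Fin (2 * d)) R) :
    Matrix (Fin (2 * d)) (Fin (2 * d)) R :=
  -(Jsymp d R * Mᵀ * Jsymp d R)

lemma Jsymp_mul_sympAdjoint (M : Matrix (Fin (2 * d)) (Fin (2 * d)) R) :
    Jsymp d R * sympAdjoint M = Mᵀ * Jsymp d R := by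
  simp only [sympAdjoint, mul_neg, ← mul_assoc, Jsymp_mul_self, neg_mul, one_mul, neg_neg]

lemma sympAdjoint_add (M N : Matrix (Fin (2 * d)) (Fin (2 * d)) R) :
    sympAdjoint (M + N) = sympAdjoint M + sympAdjoint N := by
  simp only [sympAdjoint, transpose_add, mul_add, add_mul, neg_add]

lemma sympAdjoint_mul (M N : Matrix (Fin (2 * d)) (Fin (2 * d)) R) :
    sympAdjoint (M * N) = sympAdjoint N * sympAdjoint M := by
  have h_cancel (X : Matrix (Fin (2 * d)) (Fin (2 * d)) R) :
      Jsymp d R * (Jsymp d R * X) = -X := by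
    rw [← mul_assoc, Jsymp_mul_self, neg_one_mul]
  simp only [sympAdjoint, transpose_mul, mul_assoc, neg_mul, mul_neg, h_cancel, neg_neg]

lemma sympAdjoint_sympAdjoint (M : Matrix (Fin (2 * d)) (Fin (2 * d)) R) :
    sympAdjoint (sympAdjoint M) = M := by
  simp only [sympAdjoint, transpose_neg, transpose_mul, transpose_transpose, Jsymp_transpose,
    neg_mul, mul_neg, neg_neg, mul_assoc, Jsymp_mul_self, mul_one]
  rw [← mul_assoc, Jsymp_mul_self, neg_one_mul, neg_neg]

lemma mapMatrix_sympAdjoint (f : R →+* S) (M : Matrix (Fin (2 * d)) (Fin (2 * d)) R) :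
    f.mapMatrix (sympAdjoint M) = sympAdjoint (f.mapMatrix M) := by
  simp only [sympAdjoint, _root_.map_neg, _root_.map_mul, mapMatrix_Jsymp]
  rfl

lemma transpose_mul_Jsymp_mul_eq_smul_iff {M : Matrix (Fin (2 * d)) (Fin (2 * d)) R} {c : R} :
    Mᵀ * Jsymp d R * M = c • Jsymp d R ↔ sympAdjoint M * M = c • 1 := by
  rw [← Jsymp_mul_sympAdjoint, mul_assoc]
  constructor <;> intro h
  · have h_left := congrArg (Jsymp d R * ·) h
    simp only [← mul_assoc, Jsymp_mul_self, Matrix.mul_smul] at h_left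
    simpa using h_left
  · rw [h, Matrix.mul_smul, mul_one]

lemma mem_GSp_iff {g : GL (Fin (2 * d)) R} :
    g ∈ GSp d R ↔ ∃ c : Rˣ, sympAdjoint g.val * g.val = (c : R) • 1 := by
  simp only [← transpose_mul_Jsymp_mul_eq_smul_iff]
  constructor
  · rintro ⟨⟨g, c⟩, hg, rfl⟩
    exact ⟨c, hg⟩
  · rintro ⟨c, hc⟩
    exact ⟨(g, c), hc, rfl⟩

lemma val_glMap {m : ℕ} (f : R →+* S) (g : GL (Fin m) R) :
    (glMap f g).val = f.mapMatrix g.val := rfl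

lemma glMap_glMap {m : ℕ} {T : Type*} [CommRing T] (f : R →+* S) (f' : S →+* T)
    (g : GL (Fin m) R) : glMap f' (glMap f g) = glMap (f'.comp f) g := rfl

lemma glMap_mem_GSp (f : R →+* S) {g : GL (Fin (2 * d)) R} (hg : g ∈ GSp d R) :
    glMap f g ∈ GSp d S := by
  obtain ⟨c, hc⟩ := mem_GSp_iff.mp hg
  refine mem_GSp_iff.mpr ⟨Units.map f c, ?_⟩
  rw [val_glMap, ← mapMatrix_sympAdjoint, ← _root_.map_mul, hc]
  ext i j
  simp [Matrix.one_apply, apply_ite f]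

end SympAdjoint

section BlockProj

variable {d r : ℕ} {R S : Type*} [CommRing R] [CommRing S]

lemma blk_le_two (d r i : ℕ) : blk d r i ≤ 2 := by
  unfold blk
  split_ifs <;> lia

lemma blk_rev (d r : ℕ) (i : Fin (2 * d)) : blk d r i.rev = 2 - blk d r i := by
  have hi := i.isLt
  simp only [blk, Fin.val_rev]
  split_ifs <;> lia

/-- The coordinate projection `E_k` onto the `k`-th block for the partition `(d-r, 2r, d-r)`,
blocks being numbered from `0` to `2`. -/
def blockProj (d r : ℕ) (R : Type*) [CommRing R] (k : ℕ) : Matrix (Fin (2 * d)) (Fin (2 * d)) R :=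
  diagonal fun i => if blk d r i = k then 1 else 0

lemma blockProj_mul_apply (k : ℕ) (M : Matrix (Fin (2 * d)) (Fin (2 * d)) R)
    (i j : Fin (2 * d)) :
    (blockProj d r R k * M) i j = if blk d r i = k then M i j else 0 := by
  simp only [blockProj, diagonal_mul, ite_mul, one_mul, zero_mul]

lemma mul_blockProj_apply (k : ℕ) (M : Matrix (Fin (2 * d)) (Fin (2 * d)) R)
    (i j : Fin (2 * d)) :
    (M * blockProj d r R k) i j = if blk d r j = k then M i j else 0 := by
  simp only [blockProj, mul_diagonal, mul_ite, mul_one, mul_zero]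

lemma blockProj_apply (k : ℕ) (i j : Fin (2 * d)) :
    blockProj d r R k i j = if blk d r i = k then (if i = j then 1 else 0) else 0 := by
  rw [← mul_one (blockProj d r R k), blockProj_mul_apply, Matrix.one_apply]

lemma blockProj_mul_self (k : ℕ) :
    blockProj d r R k * blockProj d r R k = blockProj d r R k := by
  ext i j
  rw [blockProj_mul_apply, blockProj_apply]
  split_ifs <;> rfl

lemma blockProj_mul_blockProj_of_ne {k l : ℕ} (hkl : k ≠ l) :
    blockProj d r R k * blockProj d r R l = 0 := by
  ext i j
  rw [blockProj_mul_apply, blockProj_apply]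
  split_ifs <;> simp_all

lemma blockProj_mul_blockProj_mul (k : ℕ) (M : Matrix (Fin (2 * d)) (Fin (2 * d)) R) :
    blockProj d r R k * (blockProj d r R k * M) = blockProj d r R k * M := by
  rw [← mul_assoc, blockProj_mul_self]

lemma blockProj_mul_blockProj_mul_of_ne {k l : ℕ} (hkl : k ≠ l)
    (M : Matrix (Fin (2 * d)) (Fin (2 * d)) R) :
    blockProj d r R k * (blockProj d r R l * M) = 0 := by
  rw [← mul_assoc, blockProj_mul_blockProj_of_ne hkl, zero_mul]

lemma blockProj_add_add : blockProj d r R 2 + blockProj d r R 1 + blockProj d r R 0 = 1 := by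
  ext i j
  have hi := blk_le_two d r i
  simp only [Matrix.add_apply, blockProj_apply, Matrix.one_apply]
  split_ifs <;> first | lia | simp

lemma mapMatrix_blockProj (f : R →+* S) (k : ℕ) :
    f.mapMatrix (blockProj d r R k) = blockProj d r S k := by
  ext i j
  simp only [RingHom.mapMatrix_apply, Matrix.map_apply, blockProj_apply, apply_ite f, map_one,
    map_zero]

lemma sympAdjoint_blockProj {k : ℕ} (hk : k ≤ 2) :
    sympAdjoint (blockProj d r R k) = blockProj d r R (2 - k) := by
  have h_comm : Jsymp d R * blockProj d r R k = blockProj d r R (2 - k) * Jsymp d R := by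
    ext i j
    rw [mul_blockProj_apply, blockProj_mul_apply, Jsymp_apply]
    have hi := blk_le_two d r i
    have hrev := blk_rev d r i
    split_ifs <;> simp_all <;> lia
  rw [sympAdjoint, blockProj, diagonal_transpose, ← blockProj, h_comm, mul_assoc, Jsymp_mul_self,
    mul_neg, mul_one, neg_neg]

lemma blockProj_two_mul_of_mem_PrSet {g : GL (Fin (2 * d)) R} (hg : g ∈ PrSet d r R) :
    blockProj d r R 2 * g.val = blockProj d r R 2 * g.val * blockProj d r R 2 := by
  ext i j
  have hj := blk_le_two d r j
  have h_low := hg.2 i j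
  rw [mul_blockProj_apply, blockProj_mul_apply]
  split_ifs <;> first | rfl | exact h_low (by lia)

lemma inv_mem_PrSet {g : GL (Fin (2 * d)) R} (hg : g ∈ PrSet d r R) : g⁻¹ ∈ PrSet d r R := by
  let _ : Invertible g.val := g.invertible
  have h_inv := blockTriangular_inv_of_blockTriangular (M := g.val)
    (b := fun i : Fin (2 * d) => blk d r i) fun i j => hg.2 i j
  refine ⟨inv_mem hg.1, fun i j hij => ?_⟩
  rw [Matrix.coe_units_inv]
  exact h_inv hij

lemma glMap_mem_PrSet (f : R →+* S) {g : GL (Fin (2 * d)) R} (hg : g ∈ PrSet d r R) :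
    glMap f g ∈ PrSet d r S := by
  refine ⟨glMap_mem_GSp f hg.1, fun i j hij => ?_⟩
  rw [val_glMap, RingHom.mapMatrix_apply, Matrix.map_apply, hg.2 i j hij, map_zero]

lemma blockProj_two_mul_inv_of_mem_PrSet {g : GL (Fin (2 * d)) R} (hg : g ∈ PrSet d r R) :
    blockProj d r R 2 * g.val * blockProj d r R 2 * (g⁻¹).val = blockProj d r R 2 := by
  rw [← blockProj_two_mul_of_mem_PrSet hg, mul_assoc, Units.mul_inv, mul_one]

/-- The subgroup of `GL_{2d}` of matrices whose last block rows are `(0, 0, 1)`; its intersection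
with `GSp_{2d}` is `Q_r`. -/
def lastRowsStabilizer (d r : ℕ) (R : Type*) [CommRing R] : Subgroup (GL (Fin (2 * d)) R) where
  carrier := {g | blockProj d r R 2 * g.val = blockProj d r R 2}
  one_mem' := mul_one _
  mul_mem' {g h} hg hh := by
    change _ * (g.val * h.val) = _
    rw [← mul_assoc, hg, hh]
  inv_mem' {g} hg := by
    change _ * (g⁻¹).val = _
    rw [← hg, mul_assoc, Units.mul_inv, mul_one, hg]

lemma mem_lastRowsStabilizer {g : GL (Fin (2 * d)) R} :
    g ∈ lastRowsStabilizer d r R ↔ blockProj d r R 2 * g.val = blockProj d r R 2 := Iff.rfl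

/-- Taking adjoints in `E₂ * g = E₂` gives `g† * E₀ = E₀`, and `g†` is `c` times the inverse. -/
lemma mul_blockProj_zero_of_mem_lastRowsStabilizer {g : GL (Fin (2 * d)) R}
    (hg : g ∈ lastRowsStabilizer d r R) {c : R} (hc : sympAdjoint g.val * g.val = c • 1) :
    g.val * blockProj d r R 0 = c • blockProj d r R 0 := by
  have h_adj : sympAdjoint g.val * blockProj d r R 0 = blockProj d r R 0 := by
    have := congrArg sympAdjoint (mem_lastRowsStabilizer.mp hg)
    rwa [sympAdjoint_mul, sympAdjoint_blockProj le_rfl] at this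
  have h_comm : g.val * sympAdjoint g.val = c • 1 := by
    rw [← mul_one (g.val * _), ← Units.mul_inv g, ← mul_assoc, mul_assoc g.val, hc]
    simp
  rw [← h_adj, ← mul_assoc, h_comm, Matrix.smul_mul, one_mul, h_adj]

lemma mem_QrSet_iff {g : GL (Fin (2 * d)) R} :
    g ∈ QrSet d r R ↔ g ∈ GSp d R ∧ g ∈ lastRowsStabilizer d r R := by
  constructor
  · rintro ⟨c, hc, h_low, -, h_last⟩
    refine ⟨mem_GSp_iff.mpr ⟨c, transpose_mul_Jsymp_mul_eq_smul_iff.mp hc⟩, ?_⟩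
    rw [mem_lastRowsStabilizer]
    ext i j
    have hj := blk_le_two d r j
    rw [blockProj_mul_apply, blockProj_apply]
    split_ifs with hi hij
    · exact (h_last i j hi (hij ▸ hi)).trans (if_pos hij)
    · by_cases hj2 : blk d r j = 2
      · exact (h_last i j hi hj2).trans (if_neg hij)
      · exact h_low i j (by lia)
    · rfl
  · rintro ⟨hg, hrows⟩
    obtain ⟨c, hc⟩ := mem_GSp_iff.mp hg
    have h_last (i j : Fin (2 * d)) (hi : blk d r i = 2) : g.val i j = if i = j then 1 else 0 := by
      simpa [blockProj_mul_apply, blockProj_apply, hi] using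
        congrFun₂ (mem_lastRowsStabilizer.mp hrows) i j
    have h_first (i j : Fin (2 * d)) (hj : blk d r j = 0) :
        g.val i j = if i = j then (c : R) else 0 := by
      have := congrFun₂ (mul_blockProj_zero_of_mem_lastRowsStabilizer hrows hc) i j
      rw [mul_blockProj_apply, if_pos hj, Matrix.smul_apply, blockProj_apply] at this
      rw [this]
      split_ifs <;> simp_all
    refine ⟨c, transpose_mul_Jsymp_mul_eq_smul_iff.mpr hc, fun i j hij => ?_,
      fun i j _ hj => h_first i j hj, fun i j hi _ => h_last i j hi⟩
    have hne : i ≠ j := by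
      rintro rfl
      exact hij.false
    have hi := blk_le_two d r i
    obtain hi2 | hj0 : blk d r i = 2 ∨ blk d r j = 0 := by lia
    · rw [h_last i j hi2, if_neg hne]
    · rw [h_first i j hj0, if_neg hne]

lemma glMap_mem_lastRowsStabilizer (f : R →+* S) {g : GL (Fin (2 * d)) R}
    (hg : g ∈ lastRowsStabilizer d r R) : glMap f g ∈ lastRowsStabilizer d r S := by
  rw [mem_lastRowsStabilizer, val_glMap, ← mapMatrix_blockProj f, ← _root_.map_mul,
    mem_lastRowsStabilizer.mp hg]

lemma blockProj_two_mul_mul_of_left_mem {q : GL (Fin (2 * d)) R} (hq : q ∈ lastRowsStabilizer d r R)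
    (g : GL (Fin (2 * d)) R) :
    blockProj d r R 2 * (q * g).val = blockProj d r R 2 * g.val := by
  rw [Units.val_mul, ← mul_assoc, mem_lastRowsStabilizer.mp hq]

lemma blockProj_two_mul_mul_of_right_mem {p q : GL (Fin (2 * d)) R} (hp : p ∈ PrSet d r R)
    (hq : q ∈ lastRowsStabilizer d r R) :
    blockProj d r R 2 * (p * q).val = blockProj d r R 2 * p.val := by
  rw [Units.val_mul, ← mul_assoc, blockProj_two_mul_of_mem_PrSet hp, mul_assoc,
    mem_lastRowsStabilizer.mp hq]

end BlockProj

section Levi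

variable {d r : ℕ} {R S : Type*} [CommRing R] [CommRing S]

/-- The block diagonal matrix `diag(D†, 1, C)`, where `C` and `D` are the last diagonal blocks
of `g` and `h`. It is a Levi element of `P_r` of similitude `1` when `C` and `D` are inverse to
each other; carrying `D` along avoids inverting a block. -/
def leviMatrix (d r : ℕ) {R : Type*} [CommRing R] (g h : Matrix (Fin (2 * d)) (Fin (2 * d)) R) :
    Matrix (Fin (2 * d)) (Fin (2 * d)) R :=
  blockProj d r R 2 * g * blockProj d r R 2 + blockProj d r R 1 +
    blockProj d r R 0 * sympAdjoint h * blockProj d r R 0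

variable (g h : Matrix (Fin (2 * d)) (Fin (2 * d)) R)

lemma blockProj_two_mul_leviMatrix :
    blockProj d r R 2 * leviMatrix d r g h = blockProj d r R 2 * g * blockProj d r R 2 := by
  simp [leviMatrix, mul_add, ← mul_assoc, blockProj_mul_self, blockProj_mul_blockProj_of_ne]

lemma sympAdjoint_leviMatrix : sympAdjoint (leviMatrix d r g h) = leviMatrix d r h g := by
  have h_two := sympAdjoint_blockProj (d := d) (r := r) (R := R) le_rfl
  have h_one := sympAdjoint_blockProj (d := d) (r := r) (R := R) one_le_two
  have h_zero := sympAdjoint_blockProj (d := d) (r := r) (R := R) zero_le_two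
  simp only [leviMatrix, sympAdjoint_add, sympAdjoint_mul, h_two, h_one, h_zero,
    sympAdjoint_sympAdjoint, mul_assoc, Nat.sub_self, Nat.sub_zero, Nat.reduceSub]
  abel

lemma mapMatrix_leviMatrix (f : R →+* S) :
    f.mapMatrix (leviMatrix d r g h) = leviMatrix d r (f.mapMatrix g) (f.mapMatrix h) := by
  simp only [leviMatrix, _root_.map_add, _root_.map_mul, mapMatrix_blockProj,
    mapMatrix_sympAdjoint]

lemma leviMatrix_blockTriangular :
    (leviMatrix d r g h).BlockTriangular fun i => blk d r i := by
  have h_corner (k : ℕ) (M : Matrix (Fin (2 * d)) (Fin (2 * d)) R) :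
      (blockProj d r R k * M * blockProj d r R k).BlockTriangular fun i => blk d r i := by
    intro i j hij
    rw [mul_blockProj_apply, blockProj_mul_apply]
    split_ifs <;> first | rfl | lia
  exact ((h_corner 2 g).add (blockTriangular_diagonal _)).add (h_corner 0 _)

/-- The last diagonal blocks of `g` and `h` are inverse to each other. -/
def LastBlocksInverse (d r : ℕ) {R : Type*} [CommRing R]
    (g h : Matrix (Fin (2 * d)) (Fin (2 * d)) R) : Prop :=
  blockProj d r R 2 * g * blockProj d r R 2 * h * blockProj d r R 2 = blockProj d r R 2 ∧
    blockProj d r R 2 * h * blockProj d r R 2 * g * blockProj d r R 2 = blockProj d r R 2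

variable {g h}

lemma leviMatrix_mul_leviMatrix (hgh : LastBlocksInverse d r g h) :
    leviMatrix d r g h * leviMatrix d r h g = 1 := by
  have hgh_adj : blockProj d r R 0 * sympAdjoint h * blockProj d r R 0 * sympAdjoint g *
      blockProj d r R 0 = blockProj d r R 0 := by
    simpa [sympAdjoint_mul, sympAdjoint_blockProj, mul_assoc] using congrArg sympAdjoint hgh.1
  have h_prod : leviMatrix d r g h * leviMatrix d r h g =
      blockProj d r R 2 * g * blockProj d r R 2 * h * blockProj d r R 2 + blockProj d r R 1 +
        blockProj d r R 0 * sympAdjoint h * blockProj d r R 0 * sympAdjoint g *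
          blockProj d r R 0 := by
    simp [leviMatrix, mul_add, add_mul, mul_assoc, blockProj_mul_self,
      blockProj_mul_blockProj_of_ne, blockProj_mul_blockProj_mul, blockProj_mul_blockProj_mul_of_ne]
  rw [h_prod, hgh.1, hgh_adj, blockProj_add_add]

/-- The element of `GL_{2d}` with matrix `leviMatrix d r g h`, whose inverse is obtained by
exchanging `g` and `h`. -/
def leviUnit (hgh : LastBlocksInverse d r g h) : GL (Fin (2 * d)) R :=
  ⟨leviMatrix d r g h, leviMatrix d r h g, leviMatrix_mul_leviMatrix hgh,
    leviMatrix_mul_leviMatrix hgh.symm⟩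

lemma leviUnit_mem_PrSet (hgh : LastBlocksInverse d r g h) : leviUnit hgh ∈ PrSet d r R := by
  refine ⟨mem_GSp_iff.mpr ⟨1, ?_⟩, fun i j hij => leviMatrix_blockTriangular g h hij⟩
  change sympAdjoint (leviMatrix d r g h) * leviMatrix d r g h = (1 : R) • 1
  rw [sympAdjoint_leviMatrix, leviMatrix_mul_leviMatrix hgh.symm, one_smul]

end Levi

section Descent

variable {d r : ℕ} {R K Z A : Type*} [CommRing R] [CommRing K] [CommRing Z] [CommRing A]
  {i : R →+* K} {ι : K →+* A} {κ : Z →+* A}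

lemma exists_mapMatrix_eq_blockProj_mul (h_pullback : ∀ x z, ι x = κ z → ∃ a, i a = x)
    {g : GL (Fin (2 * d)) K} {u : GL (Fin (2 * d)) Z}
    (h_rows : blockProj d r A 2 * (glMap ι g).val = blockProj d r A 2 * (glMap κ u).val) :
    ∃ G, i.mapMatrix G = blockProj d r K 2 * g.val := by
  have h_map : ι.mapMatrix (blockProj d r K 2 * g.val) =
      κ.mapMatrix (blockProj d r Z 2 * u.val) := by
    simpa only [val_glMap, _root_.map_mul, mapMatrix_blockProj] using h_rows
  choose G hG using fun a b => h_pullback _ _ (congrFun₂ h_map a b)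
  exact ⟨Matrix.of G, Matrix.ext hG⟩

lemma exists_mem_PrSet_inv_mul_mem_lastRowsStabilizer (hi : Function.Injective i)
    {p : GL (Fin (2 * d)) K} (hp : p ∈ PrSet d r K) {G H : Matrix (Fin (2 * d)) (Fin (2 * d)) R}
    (hG : i.mapMatrix G = blockProj d r K 2 * p.val)
    (hH : i.mapMatrix H = blockProj d r K 2 * (p⁻¹).val) :
    ∃ p₀ ∈ PrSet d r R, (glMap i p₀)⁻¹ * p ∈ lastRowsStabilizer d r K := by
  have hi_matrix : Function.Injective (i.mapMatrix (m := Fin (2 * d))) := Matrix.map_injective hi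
  have h_mul_inv := blockProj_two_mul_inv_of_mem_PrSet hp
  have h_inv_mul := blockProj_two_mul_inv_of_mem_PrSet (inv_mem_PrSet hp)
  rw [inv_inv] at h_inv_mul
  have hGH : LastBlocksInverse d r G H := by
    constructor <;> apply hi_matrix <;>
      simp only [_root_.map_mul, mapMatrix_blockProj, hG, hH, mul_assoc,
        blockProj_mul_blockProj_mul] <;>
      simp only [← mul_assoc, h_mul_inv, h_inv_mul, blockProj_mul_self]
  refine ⟨leviUnit hGH, leviUnit_mem_PrSet hGH, ?_⟩
  have h_inv : ((glMap i (leviUnit hGH))⁻¹).val = i.mapMatrix (leviMatrix d r H G) := rfl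
  rw [mem_lastRowsStabilizer, Units.val_mul, h_inv, mapMatrix_leviMatrix, ← mul_assoc,
    blockProj_two_mul_leviMatrix, hH, ← mul_assoc, blockProj_mul_self, h_inv_mul]

end Descent

namespace ZHat

lemma natCast_dvd_of_dvd {n : ℕ} (hn : n ≠ 0) {a : ℤ} (h : (n : ↥ZHat) ∣ (a : ↥ZHat)) :
    (n : ℤ) ∣ a := by
  have h_mod := map_dvd (projZHat ⟨n, Nat.pos_of_ne_zero hn⟩) h
  rw [map_natCast, map_intCast, PNat.mk_coe, ZMod.natCast_self, zero_dvd_iff] at h_mod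
  exact (ZMod.intCast_zmod_eq_zero_iff_dvd a n).mp h_mod

instance : IsAddTorsionFree ↥ZHat where
  nsmul_right_injective n hn := by
    refine (injective_iff_map_eq_zero (nsmulAddMonoidHom (α := ↥ZHat) n)).mpr fun z hz => ?_
    ext m
    let N : ℕ+ := ⟨n, Nat.pos_of_ne_zero hn⟩
    obtain ⟨a, ha⟩ := ZMod.intCast_surjective (z.1 (N * m))
    have h_dvd : (n : ℤ) * m ∣ n * a := by
      have h_coord : n • z.1 (N * m) = 0 := congrFun (congrArg Subtype.val hz) (N * m)
      rw [← ha, nsmul_eq_mul, ← Int.cast_natCast, ← Int.cast_mul,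
        ZMod.intCast_zmod_eq_zero_iff_dvd, PNat.mul_coe, Nat.cast_mul] at h_coord
      exact h_coord
    rw [← z.2 m (N * m) (Dvd.intro_left _ rfl), ← ha, map_intCast]
    exact (ZMod.intCast_zmod_eq_zero_iff_dvd a m).mpr
      (Int.dvd_of_mul_dvd_mul_left (by exact_mod_cast hn) h_dvd)

end ZHat

lemma zhatToA_injective : Function.Injective zhatToA :=
  Algebra.TensorProduct.includeLeft_injective (S := ℤ) (A := ↥ZHat)
    (Int.cast_injective : Function.Injective (algebraMap ℤ ℚ))

lemma exists_intCast_eq_of_ratToA_eq_zhatToA {x : ℚ} {z : ↥ZHat} (h : ratToA x = zhatToA z) :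
    ∃ a : ℤ, (a : ℚ) = x := by
  have h_num : ((x.num : ℤ) : ↥ZHat) = (x.den : ↥ZHat) * z := zhatToA_injective <| by
    rw [_root_.map_mul, ← h, map_natCast, map_intCast, ← map_natCast ratToA, ← _root_.map_mul,
      Rat.den_mul_eq_num, map_intCast]
  have h_dvd : (x.den : ℤ) ∣ x.num := ZHat.natCast_dvd_of_dvd x.den_nz ⟨z, h_num⟩
  have h_den : x.den = 1 := Nat.Coprime.eq_one_of_dvd x.reduced.symm (Int.natCast_dvd.mp h_dvd)
  exact ⟨x.num, Rat.coe_int_num_of_den_eq_one h_den⟩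

theorem Pr_Qr_intersect_integral_general {R K Z A : Type*} [CommRing R] [CommRing K] [CommRing Z]
    [CommRing A] {i : R →+* K} {j : R →+* Z} {ι : K →+* A} {κ : Z →+* A} {φ : R →+* A}
    (hι : ι.comp i = φ) (hκ : κ.comp j = φ) (hi : Function.Injective i)
    (h_pullback : ∀ x z, ι x = κ z → ∃ a, i a = x) (d r : ℕ) :
    ∀ k ∈ (GSp d Z).map (glMap κ),
      ((∃ p ∈ glMap ι '' PrSet d r K, ∃ q ∈ QrSet d r A, k = p * q) ↔
        (∃ p q : GL (Fin (2 * d)) A,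
          p ∈ glMap ι '' PrSet d r K ∧ (∃ p₀ : GL (Fin (2 * d)) R, glMap φ p₀ = p) ∧
          q ∈ QrSet d r A ∧ q ∈ (GSp d Z).map (glMap κ) ∧ k = p * q)) := by
  rintro k ⟨u, hu, hk⟩
  refine ⟨?_, fun ⟨p, q, hp, _, hq, _, h⟩ => ⟨p, hp, q, hq, h⟩⟩
  rintro ⟨_, ⟨p, hp, rfl⟩, q, hq, rfl⟩
  obtain ⟨-, hq_rows⟩ := mem_QrSet_iff.mp hq
  have hk_inv : glMap κ u⁻¹ = q⁻¹ * glMap ι p⁻¹ := by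
    rw [map_inv, hk, _root_.mul_inv_rev, map_inv]
  obtain ⟨G, hG⟩ := exists_mapMatrix_eq_blockProj_mul (g := p) (u := u) h_pullback <| by
    rw [hk, blockProj_two_mul_mul_of_right_mem (glMap_mem_PrSet ι hp) hq_rows]
  obtain ⟨H, hH⟩ := exists_mapMatrix_eq_blockProj_mul (g := p⁻¹) (u := u⁻¹) h_pullback <| by
    rw [hk_inv, blockProj_two_mul_mul_of_left_mem (inv_mem hq_rows)]
  obtain ⟨p₀, hp₀, h_rows⟩ := exists_mem_PrSet_inv_mul_mem_lastRowsStabilizer hi hp hG hH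
  have hp₀_K : glMap ι (glMap i p₀) = glMap φ p₀ := by rw [glMap_glMap, hι]
  have hp₀_Z : glMap κ (glMap j p₀) = glMap φ p₀ := by rw [glMap_glMap, hκ]
  set q' := (glMap φ p₀)⁻¹ * (glMap ι p * q) with hq'
  obtain ⟨u', hu', hu'q⟩ : q' ∈ (GSp d Z).map (glMap κ) :=
    mul_mem (inv_mem ⟨_, glMap_mem_GSp j hp₀.1, hp₀_Z⟩) ⟨u, hu, hk⟩
  have hq'_rows : q' ∈ lastRowsStabilizer d r A := by
    rw [hq', ← mul_assoc, ← hp₀_K, ← map_inv, ← _root_.map_mul]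
    exact mul_mem (glMap_mem_lastRowsStabilizer ι h_rows) hq_rows
  exact ⟨glMap φ p₀, q', ⟨_, glMap_mem_PrSet i hp₀, hp₀_K⟩, ⟨p₀, rfl⟩,
    mem_QrSet_iff.mpr ⟨hu'q ▸ glMap_mem_GSp κ hu', hq'_rows⟩, ⟨u', hu', hu'q⟩,
    (mul_inv_cancel_left _ _).symm⟩

/-- `P_r(ℚ)Q_r(𝔸_f) ∩ GSp_{2d}(Ẑ) = P_r(ℤ) · Q_r(Ẑ)`, where
`P_r(ℤ) = P_r(ℚ) ∩ GL_{2d}(ℤ)` and `Q_r(Ẑ) = Q_r(𝔸_f) ∩ GSp_{2d}(Ẑ)`. -/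
theorem Pr_Qr_intersect_integral (d r : ℕ) (hd : 1 ≤ d) (hr : r ≤ d - 1) :
    ∀ k ∈ GSpZinA d,
      ((∃ p ∈ PrQinA d r, ∃ q ∈ QrSet d r AQf, k = p * q) ↔
        (∃ p q : GL (Fin (2 * d)) AQf,
          p ∈ PrQinA d r ∧ (∃ p₀ : GL (Fin (2 * d)) ℤ, glMap (Int.castRingHom AQf) p₀ = p) ∧
          q ∈ QrSet d r AQf ∧ q ∈ GSpZinA d ∧ k = p * q)) :=
  Pr_Qr_intersect_integral_general (i := Int.castRingHom ℚ) (j := Int.castRingHom ↥ZHat)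
    (Subsingleton.elim _ _) (Subsingleton.elim _ _) Int.cast_injective
    (fun _ _ => exists_intCast_eq_of_ratToA_eq_zhatToA) d r
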